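/- There exist universal constants C̃, c̃ > 0 such that: for any a < b, any class F of [a,b]-valued functions on X, any x ∈ X^{2m}, and any 0 < ζ < (b−a)/2 with fat_{c̃ζ}(F) < ∞, the packing number of the restricted class satisfies P(F(x), d_2, ζ) ≤ ((b−a)/(c̃ζ))^{C̃·fat_{c̃ζ}(F)}. In particular the packing number is finite. -/

import Mathlib

open Finset

/-- The normalized Euclidean metric on `ℝ^{2m}`. -/
noncomputable def d2 {m : ℕ} (g h : Fin (2 * m) → ℝ) : ℝ :=
  Real.sqrt ((1 / (2 * m : ℝ)) * ∑ i, (g i - h i) ^ 2)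

/-- The `δ`-packing number of a set `M` with respect to a distance `d`. -/
noncomputable def packingNumber {E : Type*} (M : Set E) (d : E → E → ℝ) (δ : ℝ) : ℕ∞ :=
  ⨆ (S : Finset E) (_ : ↑S ⊆ M ∧ ∀ x ∈ S, ∀ y ∈ S, x ≠ y → δ < d x y), (S.card : ℕ∞)

/-- A finite set `S` is `γ`-shattered by `F` if some level function `r` witnesses every
subset of `S` with margin `γ`. -/
def FatShatters {X : Type*} (F : Set (X → ℝ)) (γ : ℝ) (S : Finset X) : Prop :=
  ∃ r : X → ℝ, ∀ B ⊆ S, ∃ f ∈ F,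
    (∀ x ∈ B, r x + γ ≤ f x) ∧ (∀ x ∈ S, x ∉ B → f x ≤ r x - γ)

/-- The fat-shattering dimension of `F` at scale `γ`, as an extended natural number. -/
noncomputable def fatDim {X : Type*} (F : Set (X → ℝ)) (γ : ℝ) : ℕ∞ :=
  ⨆ (S : Finset X) (_ : FatShatters F γ S), (S.card : ℕ∞)

lemma rv_extract {ι : Type*} (Q : Finset ι) {n : ℕ} (hn : 0 < n) (Y : ι → Fin n → ℝ) (t : ℝ) (k : ℕ)
    (h0 : ∀ p ∈ Q, ∀ i, 0 ≤ Y p i) (h1 : ∀ p ∈ Q, ∀ i, Y p i ≤ 1)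
    (hs : ∀ p ∈ Q, n * t ^ 2 ≤ ∑ i, Y p i)
    (hQ : (Q.card : ℝ) ≤ Real.exp (k * t ^ 2 / 4)) :
    ∃ φ : Fin k → Fin n, ∀ p ∈ Q, k * t ^ 2 / 4 ≤ ∑ j, Y p (φ j) := by
  have hn' : (0 : ℝ) < n := by exact_mod_cast hn
  have : Nonempty (Fin n) := ⟨⟨0, hn⟩⟩
  have key : ∀ p ∈ Q, ∑ i, Real.exp (-Y p i) ≤ n * Real.exp (-(t ^ 2 / 2)) := by
    intro p hp
    have e1 : ∀ y : ℝ, 0 ≤ y → y ≤ 1 → Real.exp (-y) ≤ 1 - y / 2 := by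
      intro y hy0 hy1
      have hc := convexOn_exp.2 (Set.mem_univ (0 : ℝ)) (Set.mem_univ (-1 : ℝ))
        (by linarith : 0 ≤ 1 - y) hy0 (by ring)
      simp only [smul_eq_mul, mul_zero, zero_add, Real.exp_zero, mul_one, mul_neg] at hc
      have h2 : Real.exp (-1) ≤ 1 / 2 := by
        rw [Real.exp_neg, inv_le_comm₀ (Real.exp_pos _) (by norm_num)]
        have := Real.add_one_le_exp (1 : ℝ)
        linarith
      nlinarith
    calc ∑ i, Real.exp (-Y p i) ≤ ∑ i, (1 - Y p i / 2) :=
          Finset.sum_le_sum fun i _ => e1 _ (h0 p hp i) (h1 p hp i)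
      _ = n - (∑ i, Y p i) / 2 := by
          rw [Finset.sum_sub_distrib, Finset.sum_div]; simp
      _ ≤ n * (1 - t ^ 2 / 2) := by have := hs p hp; linarith
      _ ≤ n * Real.exp (-(t ^ 2 / 2)) := by
          have := Real.add_one_le_exp (-(t ^ 2 / 2))
          apply mul_le_mul_of_nonneg_left _ hn'.le
          linarith
  have tot : ∑ φ : Fin k → Fin n, ∑ p ∈ Q, ∏ j, Real.exp (-Y p (φ j))
      ≤ ∑ φ : Fin k → Fin n, Real.exp (-(k * t ^ 2 / 4)) := by
    rw [Finset.sum_comm]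
    calc ∑ p ∈ Q, ∑ φ : Fin k → Fin n, ∏ j, Real.exp (-Y p (φ j))
        = ∑ p ∈ Q, (∑ i, Real.exp (-Y p i)) ^ k := by
          refine Finset.sum_congr rfl fun p _ => ?_
          rw [Fintype.sum_pow]
      _ ≤ ∑ p ∈ Q, (n * Real.exp (-(t ^ 2 / 2))) ^ k := by
          refine Finset.sum_le_sum fun p hp => ?_
          exact pow_le_pow_left₀ (Finset.sum_nonneg fun i _ => (Real.exp_pos _).le) (key p hp) k
      _ = (Q.card : ℝ) * ((n : ℝ) ^ k * Real.exp (-(k * t ^ 2 / 2))) := by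
          rw [Finset.sum_const, nsmul_eq_mul, mul_pow, ← Real.exp_nat_mul]
          congr 3; ring_nf
      _ ≤ Real.exp (k * t ^ 2 / 4) * ((n : ℝ) ^ k * Real.exp (-(k * t ^ 2 / 2))) := by
          gcongr
      _ = ∑ φ : Fin k → Fin n, Real.exp (-(k * t ^ 2 / 4)) := by
          rw [Finset.sum_const, nsmul_eq_mul]
          simp only [Finset.card_univ, Fintype.card_fun, Fintype.card_fin, Nat.cast_pow]
          rw [mul_left_comm, ← Real.exp_add]
          congr 2; ring
  obtain ⟨φ, -, hφ⟩ := Finset.exists_le_of_sum_le (Finset.univ_nonempty) tot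
  refine ⟨φ, fun p hp => ?_⟩
  have h3 : ∏ j, Real.exp (-Y p (φ j)) ≤ Real.exp (-(k * t ^ 2 / 4)) :=
    le_trans (Finset.single_le_sum (f := fun p => ∏ j, Real.exp (-Y p (φ j)))
      (fun p _ => Finset.prod_nonneg fun j _ => (Real.exp_pos _).le) hp) hφ
  rw [← Real.exp_sum, Real.exp_le_exp, Finset.sum_neg_distrib] at h3
  linarith

lemma rv_sqrt {N q v : ℝ} (hq0 : 0 ≤ q) (hv : 0 ≤ v) (hq : q ≤ N / 2)
    (h : √(N - q) + √v < √N) : v ≤ q / 2 := by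
  have hN : 0 ≤ N := by linarith
  have hNq : 0 ≤ N - q := by linarith
  have a1 := Real.sq_sqrt hN
  have a2 := Real.sq_sqrt hNq
  have a3 := Real.sq_sqrt hv
  have b1 := Real.sqrt_nonneg N
  have b2 := Real.sqrt_nonneg (N - q)
  have b3 := Real.sqrt_nonneg v
  have c : N - 3 * q / 4 ≤ √N * √(N - q) := by
    rw [← Real.sqrt_mul hN]
    apply Real.le_sqrt_of_sq_le
    nlinarith
  have d : √v ^ 2 ≤ (√N - √(N - q)) ^ 2 := by
    apply pow_le_pow_left₀ b3; linarith
  nlinarith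

lemma rv_sum (K : ℕ) : ∑ k ∈ Finset.range K, (2 * (k : ℝ) + 1) * (1 / 2 ^ (k + 1)) = 3 - (2 * K + 3) / 2 ^ K := by
  induction K with
  | zero => simp
  | succ K ih => rw [Finset.sum_range_succ, ih]; push_cast; field_simp; ring

lemma rv_sumodd (K : ℕ) : ∑ k ∈ Finset.range K, (2 * (k : ℝ) + 1) = (K : ℝ) ^ 2 := by
  induction K with
  | zero => simp
  | succ K ih => rw [Finset.sum_range_succ, ih]; push_cast; ring

lemma rv_decay {E : Type*} (A : Finset E) (X : E → ℝ) (w M : ℝ) (hw : 0 < w)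
    (hM : ((A.filter fun f => M < X f).card : ℝ) ≤ A.card / 2)
    (H : ∀ s, (A.filter fun f => X f ≤ s).Nonempty → (A.filter fun f => s + w ≤ X f).Nonempty →
      √((A.filter fun f => X f ≤ s).card : ℝ) + √((A.filter fun f => s + w ≤ X f).card : ℝ)
        < √(A.card : ℝ)) :
    ∑ f ∈ A, (max (X f - M) 0) ^ 2 ≤ 3 * w ^ 2 * A.card := by
  have dec : ∀ k : ℕ, ((A.filter fun f => M + k * w < X f).card : ℝ) ≤ A.card * (1 / 2 ^ (k + 1)) := by
    intro k
    induction k with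
    | zero => simpa [div_eq_mul_inv] using hM
    | succ k ih =>
      have sub : (A.filter fun f => M + (k + 1 : ℕ) * w < X f) ⊆
          (A.filter fun f => (M + k * w) + w ≤ X f) := by
        intro f; simp only [Finset.mem_filter]; push_cast
        rintro ⟨h1, h2⟩; exact ⟨h1, by linarith⟩
      have hc : ((A.filter fun f => M + (k + 1 : ℕ) * w < X f).card : ℝ) ≤
          (A.filter fun f => (M + k * w) + w ≤ X f).card := by
        exact_mod_cast Finset.card_le_card sub
      have hN : (0 : ℝ) ≤ A.card := by positivity
      have half : (A.card : ℝ) * (1 / 2 ^ (k + 1)) ≤ A.card / 2 := by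
        rw [div_eq_mul_one_div (A.card : ℝ) 2]
        apply mul_le_mul_of_nonneg_left _ hN
        apply one_div_le_one_div_of_le (by norm_num)
        calc (2 : ℝ) = 2 ^ 1 := by norm_num
          _ ≤ 2 ^ (k + 1) := pow_le_pow_right₀ (by norm_num) (by omega)
      have e2 : (A.card : ℝ) * (1 / 2 ^ (k + 1 + 1)) = (A.card : ℝ) * (1 / 2 ^ (k + 1)) / 2 := by
        rw [pow_succ (2 : ℝ) (k + 1)]; field_simp
      rw [e2]
      have part : ((A.filter fun f => X f ≤ M + k * w).card : ℝ) =
          A.card - (A.filter fun f => M + k * w < X f).card := by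
        have := Finset.card_filter_add_card_filter_not (s := A) (fun f => X f ≤ M + k * w)
        simp only [not_le] at this
        rw [← this]; push_cast; ring
      rcases Finset.eq_empty_or_nonempty (A.filter fun f => (M + k * w) + w ≤ X f) with he | hne
      · rw [he] at hc
        simp only [Finset.card_empty, Nat.cast_zero] at hc
        refine hc.trans (by positivity)
      · have hNpos : (0 : ℝ) < A.card := by
          obtain ⟨f, hf⟩ := hne
          exact_mod_cast Finset.card_pos.mpr ⟨f, (Finset.mem_filter.mp hf).1⟩
        have ne1 : (A.filter fun f => X f ≤ M + k * w).Nonempty := by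
          rw [← Finset.card_pos]
          have : (0 : ℝ) < (A.filter fun f => X f ≤ M + k * w).card := by rw [part]; linarith
          exact_mod_cast this
        have h := H _ ne1 hne
        rw [part] at h
        have := rv_sqrt (by positivity) (by positivity) (ih.trans half) h
        linarith
  obtain ⟨K, hK⟩ : ∃ K : ℕ, ∀ f ∈ A, ⌈max (X f - M) 0 / w⌉₊ ≤ K :=
    ⟨A.sup fun f => ⌈max (X f - M) 0 / w⌉₊, fun f hf => Finset.le_sup (f := fun f => ⌈max (X f - M) 0 / w⌉₊) hf⟩
  have pt : ∀ f ∈ A, (max (X f - M) 0) ^ 2 ≤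
      w ^ 2 * ∑ k ∈ Finset.range K, if M + k * w < X f then (2 * (k : ℝ) + 1) else 0 := by
    intro f hf
    set y := max (X f - M) 0 / w with hy
    have hy0 : 0 ≤ y := by positivity
    have e : max (X f - M) 0 = y * w := by rw [hy]; field_simp
    rw [e, mul_pow, mul_comm]
    apply mul_le_mul_of_nonneg_left _ (by positivity)
    calc y ^ 2 ≤ (⌈y⌉₊ : ℝ) ^ 2 := pow_le_pow_left₀ hy0 (Nat.le_ceil y) 2
      _ = ∑ k ∈ Finset.range ⌈y⌉₊, (2 * (k : ℝ) + 1) := (rv_sumodd _).symm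
      _ = ∑ k ∈ Finset.range ⌈y⌉₊, if M + k * w < X f then (2 * (k : ℝ) + 1) else 0 := by
          refine Finset.sum_congr rfl fun k hk => ?_
          rw [Finset.mem_range, Nat.lt_ceil] at hk
          rw [if_pos]
          have : (k : ℝ) * w < max (X f - M) 0 := by rw [e]; exact mul_lt_mul_of_pos_right hk hw
          have hk0 : (0 : ℝ) ≤ k * w := by positivity
          rcases lt_max_iff.mp this with h | h
          · linarith
          · linarith
      _ ≤ _ := by
          apply Finset.sum_le_sum_of_subset_of_nonneg
          · intro k; simp only [Finset.mem_range]; intro h; exact lt_of_lt_of_le h (hK f hf)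
          · intro k _ _; split_ifs <;> positivity
  calc ∑ f ∈ A, (max (X f - M) 0) ^ 2
      ≤ ∑ f ∈ A, w ^ 2 * ∑ k ∈ Finset.range K, (if M + k * w < X f then (2 * (k : ℝ) + 1) else 0) :=
        Finset.sum_le_sum pt
    _ = w ^ 2 * ∑ k ∈ Finset.range K, (2 * (k : ℝ) + 1) * (A.filter fun f => M + k * w < X f).card := by
        rw [← Finset.mul_sum, Finset.sum_comm]
        congr 1
        refine Finset.sum_congr rfl fun k _ => ?_
        rw [← Finset.sum_filter, Finset.sum_const, nsmul_eq_mul, mul_comm]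
    _ ≤ w ^ 2 * ∑ k ∈ Finset.range K, (2 * (k : ℝ) + 1) * (A.card * (1 / 2 ^ (k + 1))) := by
        gcongr with k _
        exact dec k
    _ = w ^ 2 * (A.card * ∑ k ∈ Finset.range K, (2 * (k : ℝ) + 1) * (1 / 2 ^ (k + 1))) := by
        congr 1; rw [Finset.mul_sum]; refine Finset.sum_congr rfl fun k _ => ?_; ring
    _ ≤ w ^ 2 * (A.card * 3) := by
        rw [rv_sum]; gcongr
        have : (0 : ℝ) ≤ (2 * K + 3) / 2 ^ K := by positivity
        linarith
    _ = _ := by ring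

lemma rv_median {E : Type*} (A : Finset E) (hA : A.Nonempty) (X : E → ℝ) :
    ∃ M, ((A.filter fun f => M < X f).card : ℝ) ≤ A.card / 2 ∧
      ((A.filter fun f => X f < M).card : ℝ) ≤ A.card / 2 := by
  classical
  set G := A.filter fun g => ((A.filter fun f => X g < X f).card : ℝ) ≤ A.card / 2 with hG
  have hGne : G.Nonempty := by
    obtain ⟨g, hg, hmax⟩ := A.exists_max_image X hA
    refine ⟨g, Finset.mem_filter.mpr ⟨hg, ?_⟩⟩
    rw [Finset.filter_eq_empty_iff.mpr]
    · simp; positivity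
    · intro f hf; exact not_lt.mpr (hmax f hf)
  obtain ⟨g, hg, hmin⟩ := G.exists_min_image X hGne
  refine ⟨X g, (Finset.mem_filter.mp hg).2, ?_⟩
  rcases Finset.eq_empty_or_nonempty (A.filter fun f => X f < X g) with he | hne
  · rw [he]; simp; positivity
  · obtain ⟨g', hg', hmax⟩ := (A.filter fun f => X f < X g).exists_max_image X hne
    have hg'2 := Finset.mem_filter.mp hg'
    have : ¬ ((A.filter fun f => X g' < X f).card : ℝ) ≤ A.card / 2 := by
      intro h
      have := hmin g' (Finset.mem_filter.mpr ⟨hg'2.1, h⟩)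
      linarith [hg'2.2]
    have sub : (A.filter fun f => X f < X g) ⊆ A.filter fun f => ¬ X g' < X f := by
      intro f hf
      exact Finset.mem_filter.mpr ⟨(Finset.mem_filter.mp hf).1, not_lt.mpr (hmax f hf)⟩
    have hc : ((A.filter fun f => X f < X g).card : ℝ) ≤ (A.filter fun f => ¬ X g' < X f).card := by
      exact_mod_cast Finset.card_le_card sub
    have tot := Finset.card_filter_add_card_filter_not (s := A) (fun f => X g' < X f)
    have tot' : ((A.filter fun f => X g' < X f).card : ℝ) + (A.filter fun f => ¬ X g' < X f).card = A.card := by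
      exact_mod_cast tot
    linarith

/-- small deviation -/
lemma rv_split {E : Type*} (A : Finset E) (hA : A.Nonempty) (X : E → ℝ) (w : ℝ) (hw : 0 < w)
    (hvar : 12 * w ^ 2 * (A.card : ℝ) ^ 2 < ∑ f ∈ A, ∑ g ∈ A, (X f - X g) ^ 2) :
    ∃ s, (A.filter fun f => X f ≤ s).Nonempty ∧ (A.filter fun f => s + w ≤ X f).Nonempty ∧
      √(A.card : ℝ) ≤ √((A.filter fun f => X f ≤ s).card : ℝ)
        + √((A.filter fun f => s + w ≤ X f).card : ℝ) := by
  by_contra! hcon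
  obtain ⟨M, hM1, hM2⟩ := rv_median A hA X
  have d1 := rv_decay A X w M hw hM1 hcon
  have d2 := rv_decay A (fun f => - X f) w (-M) hw (by simpa using hM2) (by
    intro s
    have e1 : (A.filter fun f => -X f ≤ s) = A.filter fun f => (-s - w) + w ≤ X f := by
      apply Finset.filter_congr; intro f _; constructor <;> intro h <;> linarith
    have e2 : (A.filter fun f => s + w ≤ -X f) = A.filter fun f => X f ≤ -s - w := by
      apply Finset.filter_congr; intro f _; constructor <;> intro h <;> linarith
    rw [e1, e2, add_comm (√ _)]
    intro h1 h2
    exact hcon _ h2 h1)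
  have d3 : ∑ f ∈ A, (X f - M) ^ 2 ≤ 6 * w ^ 2 * A.card := by
    calc ∑ f ∈ A, (X f - M) ^ 2 = ∑ f ∈ A, ((max (X f - M) 0) ^ 2 + (max (-X f - -M) 0) ^ 2) := by
          refine Finset.sum_congr rfl fun f _ => ?_
          rcases le_total (X f - M) 0 with h | h
          · rw [max_eq_right h, max_eq_left (by linarith)]; ring
          · rw [max_eq_left h, max_eq_right (by linarith)]; ring
      _ ≤ _ := by rw [Finset.sum_add_distrib]; linarith
  have d4 : ∑ f ∈ A, ∑ g ∈ A, (X f - X g) ^ 2 ≤ 2 * A.card * ∑ f ∈ A, (X f - M) ^ 2 := by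
    have e : ∑ f ∈ A, ∑ g ∈ A, (X f - X g) ^ 2 =
        2 * A.card * ∑ f ∈ A, (X f - M) ^ 2 - 2 * (∑ f ∈ A, (X f - M)) ^ 2 := by
      have : ∀ f ∈ A, ∑ g ∈ A, (X f - X g) ^ 2 = A.card * (X f - M) ^ 2
          + ∑ g ∈ A, (X g - M) ^ 2 - 2 * ((X f - M) * ∑ g ∈ A, (X g - M)) := by
        intro f _
        rw [Finset.mul_sum, Finset.mul_sum, ← nsmul_eq_mul, ← Finset.sum_const,
          ← Finset.sum_add_distrib, ← Finset.sum_sub_distrib]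
        refine Finset.sum_congr rfl fun g _ => ?_
        ring
      rw [Finset.sum_congr rfl this, Finset.sum_sub_distrib, Finset.sum_add_distrib,
        ← Finset.mul_sum, ← Finset.mul_sum, ← Finset.sum_mul, Finset.sum_const, nsmul_eq_mul]
      ring
    rw [e]
    have := sq_nonneg (∑ f ∈ A, (X f - M))
    linarith
  have : 2 * (A.card : ℝ) * ∑ f ∈ A, (X f - M) ^ 2 ≤ 2 * A.card * (6 * w ^ 2 * A.card) := by
    gcongr
  nlinarith

/-- abstract shattering -/
def RvShat {E ι : Type*} (up dn : E → ι → Prop) (A : Finset E) (T : Finset ι) : Prop :=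
  ∀ B ⊆ T, ∃ f ∈ A, (∀ p ∈ B, up f p) ∧ ∀ p ∈ T, p ∉ B → dn f p

open Classical in
lemma rv_count {E ι : Type*} (up dn : E → ι → Prop) (hd : ∀ f p, up f p → dn f p → False)
    (P : Finset ι) (n : ℕ) : ∀ A : Finset E, A.card = n → A.Nonempty →
    (∀ B ⊆ A, 2 ≤ B.card → ∃ p ∈ P, (B.filter fun f => up f p).Nonempty ∧
      (B.filter fun f => dn f p).Nonempty ∧
      √(B.card : ℝ) ≤ √((B.filter fun f => dn f p).card : ℝ) + √((B.filter fun f => up f p).card : ℝ)) →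
    √(A.card : ℝ) ≤ ((P.powerset.filter fun T => RvShat up dn A T).card : ℝ) := by
  induction n using Nat.strong_induction_on with
  | _ n ih =>
  intro A hAn hA H
  by_cases h2 : 2 ≤ A.card
  · obtain ⟨p, hp, hU, hD, hs⟩ := H A subset_rfl h2
    set U := A.filter fun f => up f p with hUdef
    set D := A.filter fun f => dn f p with hDdef
    have hUA : U ⊆ A := Finset.filter_subset _ _
    have hDA : D ⊆ A := Finset.filter_subset _ _
    have hdisj : Disjoint U D := by
      rw [Finset.disjoint_left]; intro f h1 h2
      exact hd f p (Finset.mem_filter.mp h1).2 (Finset.mem_filter.mp h2).2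
    have hsum : U.card + D.card ≤ A.card := by
      rw [← Finset.card_union_of_disjoint hdisj]
      exact Finset.card_le_card (Finset.union_subset hUA hDA)
    have iU := ih U.card (by have := hD.card_pos; omega) U rfl hU
      (fun B hB => H B (hB.trans hUA))
    have iD := ih D.card (by have := hU.card_pos; omega) D rfl hD
      (fun B hB => H B (hB.trans hDA))
    set SU := P.powerset.filter fun T => RvShat up dn U T with hSU
    set SD := P.powerset.filter fun T => RvShat up dn D T with hSD
    have nU : ∀ T ∈ SU, p ∉ T := by
      intro T hT hpT
      obtain ⟨f, hf, -, h⟩ := (Finset.mem_filter.mp hT).2 ∅ (Finset.empty_subset _)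
      exact hd f p (Finset.mem_filter.mp hf).2 (h p hpT (Finset.notMem_empty _))
    have nD : ∀ T ∈ SD, p ∉ T := by
      intro T hT hpT
      obtain ⟨f, hf, h, -⟩ := (Finset.mem_filter.mp hT).2 T subset_rfl
      exact hd f p (h p hpT) (Finset.mem_filter.mp hf).2
    have hcard : SU.card + SD.card ≤ (P.powerset.filter fun T => RvShat up dn A T).card := by
      rw [← Finset.card_union_add_card_inter]
      have himg : ((SU ∩ SD).image (insert p)).card = (SU ∩ SD).card := by
        apply Finset.card_image_of_injOn
        intro T hT T' hT' h
        have h1 := nU T (Finset.mem_inter.mp hT).1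
        have h2 := nU T' (Finset.mem_inter.mp hT').1
        have h' : insert p T = insert p T' := h
        rw [← Finset.erase_insert h1, h', Finset.erase_insert h2]
      rw [← himg, ← Finset.card_union_of_disjoint]
      · apply Finset.card_le_card
        intro T hT
        rcases Finset.mem_union.mp hT with h | h
        · rcases Finset.mem_union.mp h with h | h
          · have h' := Finset.mem_filter.mp h
            refine Finset.mem_filter.mpr ⟨h'.1, fun B hB => ?_⟩
            obtain ⟨f, hf, h3⟩ := h'.2 B hB
            exact ⟨f, hUA hf, h3⟩
          · have h' := Finset.mem_filter.mp h
            refine Finset.mem_filter.mpr ⟨h'.1, fun B hB => ?_⟩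
            obtain ⟨f, hf, h3⟩ := h'.2 B hB
            exact ⟨f, hDA hf, h3⟩
        · obtain ⟨T0, hT0, rfl⟩ := Finset.mem_image.mp h
          obtain ⟨hTU, hTD⟩ := Finset.mem_inter.mp hT0
          have hTU' := Finset.mem_filter.mp hTU
          have hTD' := Finset.mem_filter.mp hTD
          refine Finset.mem_filter.mpr ⟨?_, fun B hB => ?_⟩
          · rw [Finset.mem_powerset]
            exact Finset.insert_subset hp (Finset.mem_powerset.mp hTU'.1)
          · by_cases hpB : p ∈ B
            · obtain ⟨f, hf, h3, h4⟩ := hTU'.2 (B.erase p) (by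
                intro q hq
                have := hB (Finset.mem_of_mem_erase hq)
                exact (Finset.mem_insert.mp this).resolve_left (Finset.ne_of_mem_erase hq))
              refine ⟨f, hUA hf, ?_, ?_⟩
              · intro q hq
                by_cases hqp : q = p
                · subst hqp; exact (Finset.mem_filter.mp hf).2
                · exact h3 q (Finset.mem_erase.mpr ⟨hqp, hq⟩)
              · intro q hq hqB
                rcases Finset.mem_insert.mp hq with rfl | hq'
                · exact absurd hpB hqB
                · exact h4 q hq' (fun hh => hqB (Finset.mem_of_mem_erase hh))
            · obtain ⟨f, hf, h3, h4⟩ := hTD'.2 B (by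
                intro q hq
                refine (Finset.mem_insert.mp (hB hq)).resolve_left ?_
                rintro rfl; exact hpB hq)
              refine ⟨f, hDA hf, h3, ?_⟩
              intro q hq hqB
              rcases Finset.mem_insert.mp hq with rfl | hq'
              · exact (Finset.mem_filter.mp hf).2
              · exact h4 q hq' hqB
      · rw [Finset.disjoint_left]
        intro T hT hT2
        obtain ⟨T0, hT0, rfl⟩ := Finset.mem_image.mp hT2
        rcases Finset.mem_union.mp hT with h | h
        · exact nU _ h (Finset.mem_insert_self _ _)
        · exact nD _ h (Finset.mem_insert_self _ _)
    have hcard' : (SU.card : ℝ) + SD.card ≤ (P.powerset.filter fun T => RvShat up dn A T).card := by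
      exact_mod_cast hcard
    linarith
  · have h1 : A.card = 1 := by have := hA.card_pos; omega
    rw [h1]
    simp only [Nat.cast_one, Real.sqrt_one]
    have : 0 < (P.powerset.filter fun T => RvShat up dn A T).card := by
      rw [Finset.card_pos]
      refine ⟨∅, Finset.mem_filter.mpr ⟨Finset.empty_mem_powerset _, fun B hB => ?_⟩⟩
      obtain ⟨f, hf⟩ := hA
      rw [Finset.subset_empty.mp hB]
      exact ⟨f, hf, by simp, by simp⟩
    exact_mod_cast this

lemma rv_binom {ι : Type*} (P : Finset ι) (S : Finset (Finset ι)) (d : ℕ) (l : ℝ)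
    (hl : 0 < l) (hl1 : l ≤ 1) (hS : ∀ T ∈ S, T ⊆ P ∧ T.card ≤ d) :
    (S.card : ℝ) * l ^ d ≤ Real.exp (l * P.card) := by
  classical
  calc (S.card : ℝ) * l ^ d = ∑ T ∈ S, l ^ d := by rw [Finset.sum_const, nsmul_eq_mul]
    _ ≤ ∑ T ∈ S, l ^ T.card := Finset.sum_le_sum fun T hT =>
        pow_le_pow_of_le_one hl.le hl1 (hS T hT).2
    _ ≤ ∑ T ∈ P.powerset, l ^ T.card := by
        apply Finset.sum_le_sum_of_subset_of_nonneg
        · intro T hT; exact Finset.mem_powerset.mpr (hS T hT).1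
        · intros; positivity
    _ = (l + 1) ^ P.card := by
        have := Finset.sum_pow_mul_eq_add_pow l 1 P
        simpa using this
    _ ≤ Real.exp l ^ P.card := by
        apply pow_le_pow_left₀ (by linarith); exact Real.add_one_le_exp l
    _ = _ := by rw [← Real.exp_nat_mul, mul_comm]

lemma rv_fat {X : Type*} (F : Set (X → ℝ)) {n k : ℕ} (x : Fin n → X) (φ : Fin k → Fin n) (γ : ℝ)
    (hγ : 0 < γ) (A : Finset (Fin n → ℝ)) (hAF : ∀ g ∈ A, ∃ f ∈ F, ∀ i, g i = f (x i)) (d : ℕ)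
    (hd : ∀ S, FatShatters F γ S → S.card ≤ d) (T : Finset (Fin k × ℤ))
    (hT : RvShat (fun (g : Fin n → ℝ) (p : Fin k × ℤ) => 2 * γ * p.2 + γ ≤ g (φ p.1))
      (fun g p => g (φ p.1) ≤ 2 * γ * p.2 - γ) A T) : T.card ≤ d := by
  classical
  have hinj : Set.InjOn (fun p : Fin k × ℤ => x (φ p.1)) (T : Set (Fin k × ℤ)) := by
    intro p hp q hq hpq
    by_contra hne
    simp only at hpq
    have aux : ∀ p ∈ T, ∀ q ∈ T, p ≠ q → x (φ p.1) = x (φ q.1) →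
        2 * γ * (p.2 : ℝ) + γ ≤ 2 * γ * q.2 - γ := by
      intro p hp q hq hne hpq
      obtain ⟨g, hg, h1, h2⟩ := hT {p} (by simpa using hp)
      obtain ⟨f, -, hf⟩ := hAF g hg
      have h1' := h1 p (by simp)
      have h2' := h2 q hq (by simpa using hne.symm)
      simp only [hf] at h1' h2'
      rw [hpq] at h1'
      linarith
    have u := aux p hp q hq hne hpq
    have v := aux q hq p hp (Ne.symm hne) hpq.symm
    linarith
  rw [← Finset.card_image_of_injOn hinj]
  apply hd
  have hlev : ∀ y : X, ∃ r : ℝ, ∀ p ∈ T, x (φ p.1) = y → r = 2 * γ * p.2 := by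
    intro y
    by_cases h : ∃ p ∈ T, x (φ p.1) = y
    · obtain ⟨p, hp, hpy⟩ := h
      refine ⟨2 * γ * p.2, fun q hq hqy => ?_⟩
      have : p = q := hinj hp hq (hpy.trans hqy.symm)
      rw [this]
    · exact ⟨0, fun p hp hpy => absurd ⟨p, hp, hpy⟩ h⟩
  choose r hr using hlev
  refine ⟨r, fun B _ => ?_⟩
  obtain ⟨g, hg, h1, h2⟩ := hT (T.filter fun p => x (φ p.1) ∈ B) (Finset.filter_subset _ _)
  obtain ⟨f, hfF, hf⟩ := hAF g hg
  refine ⟨f, hfF, ?_, ?_⟩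
  · intro y hy
    obtain ⟨p, hp, rfl⟩ := Finset.mem_image.mp (‹B ⊆ _› hy)
    have := h1 p (Finset.mem_filter.mpr ⟨hp, hy⟩)
    simp only [hf] at this
    rw [hr _ p hp rfl]; exact this
  · intro y hy hyB
    obtain ⟨p, hp, rfl⟩ := Finset.mem_image.mp hy
    have := h2 p hp (fun hh => hyB (Finset.mem_filter.mp hh).2)
    simp only [hf] at this
    rw [hr _ p hp rfl]; exact this

lemma rv_coord {n k : ℕ} (φ : Fin k → Fin n) (c : ℝ) (hk : 0 < k)
    (hc : 0 ≤ c) (B : Finset (Fin n → ℝ)) (hB : 2 ≤ B.card)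
    (hsep : ∀ f ∈ B, ∀ g ∈ B, f ≠ g → k * c ≤ ∑ j, (f (φ j) - g (φ j)) ^ 2) :
    ∃ j, (B.card : ℝ) ^ 2 * c / 2 ≤ ∑ f ∈ B, ∑ g ∈ B, (f (φ j) - g (φ j)) ^ 2 := by
  classical
  have hk' : (0 : ℝ) < k := by exact_mod_cast hk
  have hB' : (2 : ℝ) ≤ B.card := by exact_mod_cast hB
  have : Nonempty (Fin k) := ⟨⟨0, hk⟩⟩
  have tot : ∑ j : Fin k, (B.card : ℝ) ^ 2 * c / 2 ≤
      ∑ j, ∑ f ∈ B, ∑ g ∈ B, (f (φ j) - g (φ j)) ^ 2 := by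
    calc ∑ j : Fin k, (B.card : ℝ) ^ 2 * c / 2 = (k * c) * ((B.card : ℝ) ^ 2 / 2) := by
          rw [Finset.sum_const, nsmul_eq_mul, Finset.card_univ, Fintype.card_fin]; ring
      _ ≤ (k * c) * (B.card * (B.card - 1)) := by
          apply mul_le_mul_of_nonneg_left _ (by positivity); nlinarith
      _ = ∑ f ∈ B, ∑ g ∈ B.erase f, k * c := by
          rw [Finset.sum_congr rfl (g := fun f => ((B.card : ℝ) - 1) * (k * c))]
          · rw [Finset.sum_const, nsmul_eq_mul]; ring
          · intro f hf
            rw [Finset.sum_const, nsmul_eq_mul, Finset.card_erase_of_mem hf, Nat.cast_sub (by omega)]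
            simp
      _ ≤ ∑ f ∈ B, ∑ g ∈ B, ∑ j, (f (φ j) - g (φ j)) ^ 2 := by
          refine Finset.sum_le_sum fun f hf => ?_
          refine le_trans (Finset.sum_le_sum fun g hg => hsep f hf g (Finset.mem_of_mem_erase hg)
            (Finset.ne_of_mem_erase hg).symm) ?_
          apply Finset.sum_le_sum_of_subset_of_nonneg (Finset.erase_subset _ _)
          intros; positivity
      _ = _ := by
          rw [Finset.sum_comm (s := Finset.univ)]
          refine Finset.sum_congr rfl fun f _ => ?_
          rw [Finset.sum_comm]
  obtain ⟨j, -, hj⟩ := Finset.exists_le_of_sum_le Finset.univ_nonempty tot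
  exact ⟨j, hj⟩

lemma rv_core {X : Type*} (F : Set (X → ℝ)) (a b : ℝ) (hab : a < b)
    (hF : ∀ f ∈ F, ∀ y, f y ∈ Set.Icc a b) (m : ℕ) (x : Fin (2 * m) → X) (ζ : ℝ) (hζ : 0 < ζ)
    (hζ2 : ζ < (b - a) / 2) (d : ℕ) (hd : ∀ S, FatShatters F (1 / 40 * ζ) S → S.card ≤ d)
    (A : Finset (Fin (2 * m) → ℝ)) (hAF : ∀ g ∈ A, ∃ f ∈ F, ∀ i, g i = f (x i))
    (hsep : ∀ g ∈ A, ∀ h ∈ A, g ≠ h → ζ < d2 g h) (h2 : 2 ≤ A.card) :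
    (A.card : ℝ) ≤ ((b - a) / (1 / 40 * ζ)) ^ (12 * d) := by
  classical
  obtain ⟨R, hR⟩ : ∃ R, R = b - a := ⟨_, rfl⟩
  obtain ⟨t, ht⟩ : ∃ t, t = ζ / R := ⟨_, rfl⟩
  have hRpos : 0 < R := by linarith
  have htpos : 0 < t := by rw [ht]; positivity
  have hζt : ζ = t * R := by rw [ht]; field_simp
  have ht2 : t < 1 / 2 := by rw [ht, div_lt_iff₀ hRpos]; linarith
  have hm : 0 < m := by
    rcases Nat.eq_zero_or_pos m with rfl | h
    · exfalso
      obtain ⟨g, hg, h, hh, hne⟩ := Finset.one_lt_card.mp (by omega : 1 < A.card)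
      exact hne (funext fun i => by have := i.2; omega)
    · exact h
  have hmR : (0 : ℝ) < m := by exact_mod_cast hm
  have hbd : ∀ g ∈ A, ∀ i, a ≤ g i ∧ g i ≤ b := by
    intro g hg i
    obtain ⟨f, hf, he⟩ := hAF g hg
    rw [he]; exact hF f hf _
  obtain ⟨L, hL⟩ : ∃ L, L = Real.log A.card := ⟨_, rfl⟩
  have hNpos : (0 : ℝ) < A.card := by exact_mod_cast (by omega : 0 < A.card)
  have hLN : (A.card : ℝ) = Real.exp L := by rw [hL, Real.exp_log hNpos]
  have hL2 : 1 / 4 ≤ L := by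
    have h1 : Real.log 2 ≤ L := by
      rw [hL]; exact Real.log_le_log (by norm_num) (by exact_mod_cast h2)
    have := Real.log_two_gt_d9
    linarith
  obtain ⟨k, hk⟩ : ∃ k, k = ⌈8 * L / t ^ 2⌉₊ := ⟨_, rfl⟩
  have hk1 : 8 * L ≤ k * t ^ 2 := by
    have := Nat.le_ceil (8 * L / t ^ 2)
    rw [← hk, div_le_iff₀ (by positivity)] at this
    exact this
  have hk2 : k * t ^ 2 ≤ 9 * L := by
    have := Nat.ceil_lt_add_one (a := 8 * L / t ^ 2) (by positivity)
    rw [← hk] at this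
    have h3 : k * t ^ 2 ≤ (8 * L / t ^ 2 + 1) * t ^ 2 := by gcongr
    have h4 : (8 * L / t ^ 2 + 1) * t ^ 2 = 8 * L + t ^ 2 := by field_simp
    nlinarith
  have hkpos : 0 < k := by
    rw [hk, Nat.ceil_pos]; positivity
  obtain ⟨φ, hφ⟩ := rv_extract A.offDiag (n := 2 * m) (by omega)
    (fun p i => ((p.1 i - p.2 i) / R) ^ 2) t k
    (fun p _ i => by positivity)
    (fun p hp i => by
      obtain ⟨h1, h2, -⟩ := Finset.mem_offDiag.mp hp
      obtain ⟨u1, u2⟩ := hbd _ h1 i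
      obtain ⟨v1, v2⟩ := hbd _ h2 i
      rw [sq_le_one_iff_abs_le_one, abs_le]
      constructor
      · rw [le_div_iff₀ hRpos]; linarith
      · rw [div_le_iff₀ hRpos]; linarith)
    (fun p hp => by
      obtain ⟨h1, h2, hne⟩ := Finset.mem_offDiag.mp hp
      have h := hsep _ h1 _ h2 hne
      unfold d2 at h
      rw [Real.lt_sqrt hζ.le, one_div, inv_mul_eq_div, lt_div_iff₀ (by positivity)] at h
      simp only [div_pow]
      rw [← Finset.sum_div, le_div_iff₀ (by positivity)]
      push_cast
      rw [hζt] at h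
      nlinarith)
    (by
      calc (A.offDiag.card : ℝ) ≤ (A.card : ℝ) ^ 2 := by
            rw [Finset.offDiag_card, sq]
            exact_mod_cast Nat.sub_le _ _
        _ = Real.exp (2 * L) := by rw [hLN, ← Real.exp_nat_mul]; norm_num
        _ ≤ _ := by rw [Real.exp_le_exp]; linarith)
  have hφ' : ∀ f ∈ A, ∀ g ∈ A, f ≠ g → k * (ζ ^ 2 / 4) ≤ ∑ j, (f (φ j) - g (φ j)) ^ 2 := by
    intro f hf g hg hne
    have := hφ (f, g) (Finset.mem_offDiag.mpr ⟨hf, hg, hne⟩)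
    simp only [div_pow] at this
    rw [← Finset.sum_div, le_div_iff₀ (by positivity)] at this
    rw [hζt]
    linarith
  obtain ⟨γ, hγ⟩ : ∃ γ, γ = 1 / 40 * ζ := ⟨_, rfl⟩
  have hγpos : 0 < γ := by rw [hγ]; positivity
  set P : Finset (Fin k × ℤ) := Finset.univ ×ˢ Finset.Icc ⌈a / (2 * γ)⌉ ⌊b / (2 * γ)⌋ with hP
  have hcount := rv_count (fun (g : Fin (2 * m) → ℝ) (p : Fin k × ℤ) => 2 * γ * p.2 + γ ≤ g (φ p.1))
    (fun g p => g (φ p.1) ≤ 2 * γ * p.2 - γ) (fun f p h1 h2 => by linarith) P A.card A rfl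
    (Finset.card_pos.mp (by omega)) (by
      intro B hB hB2
      have hBpos : (0 : ℝ) < B.card := by exact_mod_cast (by omega : 0 < B.card)
      obtain ⟨j, hj⟩ := rv_coord φ (ζ ^ 2 / 4) hkpos (by positivity) B hB2
        (fun f hf g hg => hφ' f (hB hf) g (hB hg))
      obtain ⟨s, hs1, hs2, hs3⟩ := rv_split B (Finset.card_pos.mp (by omega)) (fun f => f (φ j))
        (4 * γ) (by positivity) (lt_of_lt_of_le (by
          rw [hγ]
          have : 0 < (B.card : ℝ) ^ 2 * ζ ^ 2 := mul_pos (pow_pos hBpos 2) (pow_pos hζ 2)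
          nlinarith) hj)
      obtain ⟨z, hz⟩ : ∃ z, z = ⌈(s + γ) / (2 * γ)⌉ := ⟨_, rfl⟩
      have hz1 : s + γ ≤ 2 * γ * z := by
        have := Int.le_ceil ((s + γ) / (2 * γ))
        rw [← hz, div_le_iff₀ (by positivity)] at this
        linarith
      have hz2 : 2 * γ * z ≤ s + 3 * γ := by
        have := Int.ceil_lt_add_one ((s + γ) / (2 * γ))
        rw [← hz, ← sub_lt_iff_lt_add, lt_div_iff₀ (by positivity)] at this
        linarith
      have sub1 : (B.filter fun f => f (φ j) ≤ s) ⊆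
          B.filter fun f => f (φ j) ≤ 2 * γ * z - γ := by
        intro f hf
        rw [Finset.mem_filter] at *
        exact ⟨hf.1, by linarith [hf.2]⟩
      have sub2 : (B.filter fun f => s + 4 * γ ≤ f (φ j)) ⊆
          B.filter fun f => 2 * γ * z + γ ≤ f (φ j) := by
        intro f hf
        rw [Finset.mem_filter] at *
        exact ⟨hf.1, by linarith [hf.2]⟩
      refine ⟨(j, z), ?_, hs2.mono sub2, hs1.mono sub1, hs3.trans ?_⟩
      · rw [hP, Finset.mem_product]
        refine ⟨Finset.mem_univ _, ?_⟩
        rw [Finset.mem_Icc, Int.ceil_le, Int.le_floor, div_le_iff₀ (by positivity),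
          le_div_iff₀ (by positivity)]
        obtain ⟨f, hf⟩ := hs1
        obtain ⟨g, hg⟩ := hs2
        rw [Finset.mem_filter] at hf hg
        have b1 := hbd f (hB hf.1) (φ j)
        have b2 := hbd g (hB hg.1) (φ j)
        constructor <;> linarith [hf.2, hg.2, b1.1, b2.2]
      · have c1 : ((B.filter fun f => f (φ j) ≤ s).card : ℝ) ≤
            (B.filter fun f => f (φ j) ≤ 2 * γ * z - γ).card := by
          exact_mod_cast Finset.card_le_card sub1
        have c2 : ((B.filter fun f => s + 4 * γ ≤ f (φ j)).card : ℝ) ≤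
            (B.filter fun f => 2 * γ * z + γ ≤ f (φ j)).card := by
          exact_mod_cast Finset.card_le_card sub2
        exact add_le_add (Real.sqrt_le_sqrt c1) (Real.sqrt_le_sqrt c2))
  obtain ⟨l, hl⟩ : ∃ l, l = t ^ 3 / 756 := ⟨_, rfl⟩
  have hlpos : 0 < l := by rw [hl]; positivity
  have ht3 : t ^ 3 ≤ 1 := pow_le_one₀ htpos.le (by linarith)
  have hbin := rv_binom P (P.powerset.filter fun T => RvShat
    (fun (g : Fin (2 * m) → ℝ) (p : Fin k × ℤ) => 2 * γ * p.2 + γ ≤ g (φ p.1))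
    (fun g p => g (φ p.1) ≤ 2 * γ * p.2 - γ) A T) d l hlpos (by rw [hl]; linarith) (by
      intro T hT
      obtain ⟨h1, h2⟩ := Finset.mem_filter.mp hT
      exact ⟨Finset.mem_powerset.mp h1, rv_fat F x φ γ hγpos A hAF d (by rw [hγ]; exact hd) T h2⟩)
  have hPc : (P.card : ℝ) ≤ k * (21 / t) := by
    rw [hP, Finset.card_product, Finset.card_univ, Fintype.card_fin, Int.card_Icc]
    push_cast
    gcongr
    have e1 := Int.le_ceil (a / (2 * γ))
    have e2 := Int.floor_le (b / (2 * γ))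
    have e3 : b / (2 * γ) - a / (2 * γ) = 20 / t := by
      rw [hγ, ← sub_div, ← hR, hζt]; field_simp; norm_num
    have e4 : 1 ≤ 1 / t := by rw [le_div_iff₀ htpos]; linarith
    have e5 : 21 / t = 20 / t + 1 / t := by ring
    have e6 : 0 ≤ 20 / t := by positivity
    have cast : (((⌊b / (2 * γ)⌋ + 1 - ⌈a / (2 * γ)⌉).toNat : ℤ) : ℝ) ≤ 21 / t := by
      rw [Int.toNat_eq_max]
      push_cast
      apply max_le <;> linarith
    exact_mod_cast cast
  have hlP : l * P.card ≤ L / 4 := by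
    calc l * P.card ≤ l * (k * (21 / t)) := by gcongr
      _ = (k * t ^ 2) / 36 := by rw [hl]; field_simp; norm_num
      _ ≤ L / 4 := by linarith
  have hsq : √(A.card : ℝ) = Real.exp (L / 2) := by
    rw [hLN, Real.exp_half]
  have hfin : Real.exp (L / 4) * l ^ d ≤ 1 := by
    have h1 : Real.exp (L / 2) * l ^ d ≤ Real.exp (L / 4) := by
      calc Real.exp (L / 2) * l ^ d ≤ _ := by
            rw [← hsq]
            exact mul_le_mul_of_nonneg_right hcount (by positivity)
        _ ≤ _ := hbin
        _ ≤ _ := Real.exp_le_exp.mpr hlP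
    have h2 : Real.exp (L / 2) = Real.exp (L / 4) * Real.exp (L / 4) := by
      rw [← Real.exp_add]; ring_nf
    rw [h2, mul_assoc] at h1
    have := Real.exp_pos (L / 4)
    exact le_of_mul_le_mul_left (by linarith) this
  have h5 : Real.exp (L / 4) ≤ (1 / l) ^ d := by
    rw [one_div, inv_pow, ← one_div, le_div_iff₀ (by positivity)]; exact hfin
  have h6 : 1 / l ≤ (40 / t) ^ 3 := by
    rw [hl, one_div_div, div_pow]
    gcongr
    norm_num
  have h7 : (b - a) / (1 / 40 * ζ) = 40 / t := by
    rw [← hR, hζt]; field_simp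
  rw [h7]
  calc (A.card : ℝ) = Real.exp (L / 4) ^ 4 := by
        rw [hLN, ← Real.exp_nat_mul]; congr 1; push_cast; ring
    _ ≤ (((40 / t) ^ 3) ^ d) ^ 4 := by
        gcongr
        exact h5.trans (by gcongr)
    _ = _ := by rw [← pow_mul, ← pow_mul]; congr 1; ring

/-- **Rudelson–Vershynin packing bound.** There are universal constants `C̃, c̃ > 0` such
that, for any class `F` of `[a,b]`-valued functions, any sample `x ∈ X^{2m}` and any
`0 < ζ < (b-a)/2` with `fat_{c̃ζ}(F) < ∞`, the `ζ`-packing number of the restricted class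
`F(x)` in `(ℝ^{2m}, d₂)` is at most `((b-a)/(c̃ζ))^{C̃·fat_{c̃ζ}(F)}`; in particular it is
finite. -/
theorem rudelson_vershynin_packing :
    ∃ Ct ct : ℝ, 0 < Ct ∧ 0 < ct ∧
      ∀ {X : Type} (F : Set (X → ℝ)) (a b : ℝ), a < b →
        (∀ f ∈ F, ∀ y, f y ∈ Set.Icc a b) →
        ∀ (m : ℕ) (x : Fin (2 * m) → X) (ζ : ℝ), 0 < ζ → ζ < (b - a) / 2 →
          fatDim F (ct * ζ) < ⊤ →
          packingNumber {g : Fin (2 * m) → ℝ | ∃ f ∈ F, ∀ i, g i = f (x i)}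
              (d2 (m := m)) ζ
            ≤ (⌊((b - a) / (ct * ζ)) ^ (Ct * ((fatDim F (ct * ζ)).toNat : ℝ))⌋₊ : ℕ∞) := by
  refine ⟨12, 1 / 40, by norm_num, by norm_num, ?_⟩
  intro X F a b hab hF m x ζ hζ hζ2 hfat
  unfold packingNumber
  refine iSup₂_le fun A hA => ?_
  have hbase : 1 ≤ (b - a) / (1 / 40 * ζ) := by
    rw [le_div_iff₀ (by positivity)]; linarith
  rw [Nat.cast_le]
  apply Nat.le_floor
  by_cases h2 : 2 ≤ A.card
  · have h := rv_core F a b hab hF m x ζ hζ hζ2 (fatDim F (1 / 40 * ζ)).toNat (by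
      intro S hS
      have h1 : (S.card : ℕ∞) ≤ fatDim F (1 / 40 * ζ) :=
        le_iSup₂ (f := fun (S : Finset X) (_ : FatShatters F (1 / 40 * ζ) S) => (S.card : ℕ∞)) S hS
      rw [← ENat.natCast_toNat hfat.ne] at h1
      exact_mod_cast h1) A (fun g hg => hA.1 hg) hA.2 h2
    rw [← Real.rpow_natCast] at h
    push_cast at h
    exact h
  · have h1 : (A.card : ℝ) ≤ 1 := by exact_mod_cast (by omega : A.card ≤ 1)
    exact h1.trans (Real.one_le_rpow hbase (by positivity))
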